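/- arXiv:0910.3113 — 2 statements merged into one kernel-verified Lean document; each statement's English description precedes it below -/
import Mathlib

section
/- Let n ≥ 2, 1 ≤ i < n, and let L''_{n,i} ∈ ℝ^{n×n} be the matrix with (L''_{n,i})_{kk} = 2 for k ∉ {i, n}, (L''_{n,i})_{ii} = 1, (L''_{n,i})_{nn} = 1, (L''_{n,i})_{k+1,k} = −1 for 1 ≤ k ≤ n−1, (L''_{n,i})_{k,k+1} = −1 for 1 ≤ k ≤ n−1 with k ≠ i, (L''_{n,i})_{1,n} = −1, and all other entries 0. Then L''_{n,i} has a complex eigenvalue with nonzero imaginary part if and only if 2i ∉ {n−1, n, n+1}. Moreover, if 2i = n then the characteristic polynomial factors over ℝ as Π_{k=1}^{n/2} (λ − 4·cos²(πk/n))·(λ − 4·cos²(πk/(n+2))), and if 2i = n−1 or 2i = n+1 then it factors as Π_{k=1}^{n} (λ − 4·cos²(πk/(n+1))). -/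
open Polynomial Real

/-!
Adding `1` at the corner of `L''` leaves a block triangular matrix with two grounded path Laplacians
on the diagonal, and the corner cofactor is triangular, so the characteristic polynomial is
`P = W_i W_{n-i} - (-1)^n` with `W_m` the shifted Chebyshev polynomials of the fourth kind. If
`i` and `n - i` differ by at most one, the identity `S_m² + S_{m+1}² - X S_m S_{m+1} = 1` factors
`P` into `X` and polynomials `S_m(X - 2)`, whose roots are explicit and real.

Otherwise suppose that all roots are real. Then `log |P|` is strictly concave on every interval
without roots, so `|P|` cannot take a value at an inner point that is at most both end values. But
`|P(4 sin² s)| = |1 - cos (as) cos (bs) / cos² s|` with `a = 2i + 1` and `b = 2(n - i) + 1`. For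
small `s` the product `cos (as) cos (bs)` stays below `cos² s`, so that there are no roots, while it
is successively `≤ 0`, `≥ 0` and `≤ 0` at three points, so that `|P|` is `≥ 1`, `≤ 1` and `≥ 1`.
-/

section ShiftedChebyshev

variable (R : Type*) [CommRing R]

/-- The Chebyshev polynomial of the fourth kind `W = U_m + U_{m-1}`, rescaled to the variable
`(X - 2) / 2`; it is the characteristic polynomial of `groundedPathLaplacian R m`. The rescaling
is done by passing from `U` to `S`, so that `2` need not be invertible. -/
noncomputable def shiftedW (m : ℕ) : R[X] :=
  (Chebyshev.S R m + Chebyshev.S R (m - 1)).comp (X - 2)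

theorem shiftedW_zero : shiftedW R 0 = 1 := by simp [shiftedW]

theorem shiftedW_one : shiftedW R 1 = X - 1 := by
  simp only [shiftedW, Nat.cast_one, sub_self, Chebyshev.S_one, Chebyshev.S_zero, add_comp, X_comp,
    one_comp]
  ring

theorem shiftedW_add_two (m : ℕ) :
    shiftedW R (m + 2) = (X - 2) * shiftedW R (m + 1) - shiftedW R m := by
  have hprev := Chebyshev.S_sub_one R m
  have hnext := Chebyshev.S_add_two R m
  simp only [shiftedW, Nat.cast_add, Nat.cast_ofNat, Nat.cast_one, add_sub_cancel_right,
    show (m : ℤ) + 2 - 1 = m + 1 by ring, hprev, hnext, add_comp, sub_comp, mul_comp, X_comp]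
  ring

theorem shiftedW_comp_X_sq (m : ℕ) : (shiftedW R m).comp (X ^ 2) = Chebyshev.S R (2 * m) := by
  induction m using Nat.twoStepInduction with
  | zero => simp [shiftedW_zero]
  | one => simp [shiftedW_one, Chebyshev.S_two]
  | more m ih₀ ih₁ =>
    have h₂ := Chebyshev.S_add_two R (2 * m)
    have h₃ := Chebyshev.S_add_two R (2 * m + 1)
    have h₄ := Chebyshev.S_add_two R (2 * m + 2)
    simp only [shiftedW_add_two, sub_comp, mul_comp, X_comp, ofNat_comp, ih₀, ih₁]
    push_cast
    ring_nf at h₂ h₃ h₄ ⊢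
    linear_combination (-1 : R[X]) * h₄ - X * h₃ - h₂

theorem shiftedW_sq_sub_one (m : ℕ) :
    shiftedW R (m + 1) ^ 2 - 1 =
      X * (Chebyshev.S R m).comp (X - 2) * (Chebyshev.S R (m + 1 : ℕ)).comp (X - 2) := by
  have h := congrArg (comp · (X - 2)) (Chebyshev.S_sq_add_S_sq R m)
  simp only [add_comp, sub_comp, mul_comp, pow_comp, X_comp, one_comp] at h
  simp only [shiftedW, Nat.cast_add, Nat.cast_one, add_sub_cancel_right, add_comp]
  linear_combination h

theorem shiftedW_mul_succ_add_one (m : ℕ) :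
    shiftedW R m * shiftedW R (m + 1) + 1 = X * (Chebyshev.S R m).comp (X - 2) ^ 2 := by
  have h := congrArg (comp · (X - 2)) (Chebyshev.S_sq_add_S_sq R m)
  have hprev := Chebyshev.S_sub_one R m
  simp only [add_comp, sub_comp, mul_comp, pow_comp, X_comp, one_comp] at h
  simp only [shiftedW, Nat.cast_add, Nat.cast_one, add_sub_cancel_right, hprev, add_comp, sub_comp,
    mul_comp, X_comp]
  linear_combination -h

end ShiftedChebyshev

theorem S_real_eq_prod (N : ℕ) :
    Chebyshev.S ℝ N = ∏ k ∈ Finset.Icc 1 N, (X - C (2 * cos (π * k / (N + 1)))) := by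
  have hinj := (Finset.range N).nodup_map_iff_injOn.mp (Chebyshev.roots_U_real_nodup N)
  have hcard : (Chebyshev.U ℝ N).roots.card = (Chebyshev.U ℝ N).natDegree := by
    rw [Chebyshev.roots_U_real, Chebyshev.natDegree_U_natCast, Finset.card_val,
      Finset.card_image_of_injOn hinj, Finset.card_range]
  have hU : Chebyshev.U ℝ N =
      ∏ k ∈ Finset.Icc 1 N, (C 2 * (X - C (cos (π * k / (N + 1))))) := by
    rw [← C_leadingCoeff_mul_prod_multiset_X_sub_C hcard, Chebyshev.roots_U_real,
      Chebyshev.leadingCoeff_U_natCast, ← Finset.prod_eq_multiset_prod, Finset.prod_image hinj,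
      Finset.prod_mul_distrib, Finset.prod_const, Nat.card_Icc, Nat.add_sub_cancel, C_pow,
      ← Finset.Ico_add_one_right_eq_Icc, Finset.range_eq_Ico,
      ← Finset.prod_Ico_add' (fun k : ℕ => X - C (cos (π * k / (N + 1)))) 0 N 1]
    push_cast
    simp only [mul_comm]
  rw [Chebyshev.S_eq_U_comp_half_mul_X, hU, prod_comp]
  refine Finset.prod_congr rfl fun k _ => ?_
  rw [mul_comp, C_comp, sub_comp, X_comp, C_comp, mul_sub, ← mul_assoc, ← C_mul, ← C_mul,
    mul_invOf_self, C_1, one_mul]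

theorem S_comp_X_sub_two_eq_prod (m : ℕ) :
    (Chebyshev.S ℝ m).comp (X - 2) =
      ∏ k ∈ Finset.Icc 1 m, (X - C (4 * cos (π * k / (2 * (m + 1))) ^ 2)) := by
  rw [S_real_eq_prod, prod_comp]
  refine Finset.prod_congr rfl fun k _ => ?_
  have hdouble : π * k / (m + 1) = 2 * (π * k / (2 * (m + 1))) := by field_simp
  rw [hdouble, cos_two_mul, sub_comp, X_comp, C_comp, sub_sub, ← C_ofNat, ← C_add]
  congr 2
  ring

theorem shiftedW_sq_sub_one_eq_prod {m : ℕ} (hm : 1 ≤ m) :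
    shiftedW ℝ m ^ 2 - 1 = ∏ k ∈ Finset.Icc 1 m,
      (X - C (4 * cos (π * k / (2 * m)) ^ 2)) * (X - C (4 * cos (π * k / (2 * m + 2)) ^ 2)) := by
  obtain ⟨l, rfl⟩ := Nat.exists_eq_add_of_le' hm
  have hlast : cos (π * (l + 1 : ℕ) / (2 * (l + 1 : ℕ))) = 0 := by
    rw [mul_div_mul_right _ _ (by positivity), cos_pi_div_two]
  rw [shiftedW_sq_sub_one, Finset.prod_mul_distrib, Finset.prod_Icc_succ_top hm, hlast,
    S_comp_X_sub_two_eq_prod, S_comp_X_sub_two_eq_prod, zero_pow two_ne_zero, mul_zero, C_0,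
    sub_zero, mul_comm X]
  simp only [mul_add, mul_one, Nat.cast_add, Nat.cast_one]

theorem prod_Icc_eq_mul_sq_of_reflect {M : Type*} [CommMonoid M] (f : ℕ → M) (m : ℕ)
    (hf : ∀ k ∈ Finset.Icc 1 m, f (2 * m + 2 - k) = f k) :
    ∏ k ∈ Finset.Icc 1 (2 * m + 1), f k = f (m + 1) * (∏ k ∈ Finset.Icc 1 m, f k) ^ 2 := by
  have hreflect : ∏ k ∈ Finset.Ico (m + 2) (2 * m + 2), f k = ∏ k ∈ Finset.Ico 1 (m + 1), f k := by
    rw [← Finset.Ico_add_one_right_eq_Icc] at hf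
    rw [← Finset.prod_congr rfl hf, Finset.prod_Ico_reflect _ _ (by lia)]
    congr 2
    lia
  rw [← Finset.Ico_add_one_right_eq_Icc, ← Finset.Ico_add_one_right_eq_Icc,
    ← Finset.prod_Ico_consecutive _ (show 1 ≤ m + 1 by lia) (show m + 1 ≤ 2 * m + 1 + 1 by lia),
    Finset.prod_eq_prod_Ico_succ_bot (show m + 1 < 2 * m + 1 + 1 by lia), hreflect, sq]
  exact mul_left_comm _ _ _

theorem shiftedW_mul_succ_add_one_eq_prod (m : ℕ) :
    shiftedW ℝ m * shiftedW ℝ (m + 1) + 1 =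
      ∏ k ∈ Finset.Icc 1 (2 * m + 1), (X - C (4 * cos (π * k / (2 * (m + 1))) ^ 2)) := by
  have hreflect : ∀ k ∈ Finset.Icc 1 m,
      X - C (4 * cos (π * (2 * m + 2 - k : ℕ) / (2 * (m + 1))) ^ 2) =
        X - C (4 * cos (π * k / (2 * (m + 1))) ^ 2) := fun k hk => by
    have hkm : k ≤ 2 * m + 2 := by grind
    have hangle : π * (2 * m + 2 - k : ℕ) / (2 * (m + 1)) = π - π * k / (2 * (m + 1)) := by
      push_cast [hkm]
      field_simp
    rw [hangle, cos_pi_sub, neg_sq]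
  have hmid : cos (π * (m + 1 : ℕ) / (2 * (m + 1))) = 0 := by
    rw [Nat.cast_succ, mul_div_mul_right _ _ (by positivity), cos_pi_div_two]
  rw [shiftedW_mul_succ_add_one, prod_Icc_eq_mul_sq_of_reflect _ _ hreflect, hmid,
    S_comp_X_sub_two_eq_prod, zero_pow two_ne_zero, mul_zero, C_0, sub_zero]

section RingLaplacian

variable {R : Type*} [CommRing R]

theorem det_succ_succ_of_tridiagonal {m : ℕ} (M : Matrix (Fin (m + 2)) (Fin (m + 2)) R)
    (hrow : ∀ k : Fin m, M 0 k.succ.succ = 0) (hcol : ∀ k : Fin m, M k.succ.succ 0 = 0) :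
    M.det = M 0 0 * (M.submatrix Fin.succ Fin.succ).det -
      M 0 1 * M 1 0 * (M.submatrix (Fin.succ ∘ Fin.succ) (Fin.succ ∘ Fin.succ)).det := by
  have hminor : (M.submatrix Fin.succ (Fin.succAbove 1)).det =
      M 1 0 * (M.submatrix (Fin.succ ∘ Fin.succ) (Fin.succ ∘ Fin.succ)).det := by
    rw [Matrix.det_succ_column_zero, Fin.sum_univ_succ, Finset.sum_eq_zero fun k _ => ?_]
    · simp [Matrix.submatrix_submatrix, Function.comp_def]
    · simp [hcol]
  have htail : ∑ k : Fin m, (-1) ^ (k.succ.succ : ℕ) * M 0 k.succ.succ *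
      (M.submatrix Fin.succ k.succ.succ.succAbove).det = 0 :=
    Finset.sum_eq_zero fun k _ => by rw [hrow, mul_zero, zero_mul]
  rw [Matrix.det_succ_row_zero, Fin.sum_univ_succ, Fin.sum_univ_succ, htail, Fin.succ_zero_eq_one,
    hminor, Fin.succAbove_zero, Fin.val_zero, Fin.val_one]
  ring

theorem charpoly_succ_succ_of_tridiagonal {m : ℕ} (M : Matrix (Fin (m + 2)) (Fin (m + 2)) R)
    (hrow : ∀ k : Fin m, M 0 k.succ.succ = 0) (hcol : ∀ k : Fin m, M k.succ.succ 0 = 0) :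
    M.charpoly = (X - C (M 0 0)) * (M.submatrix Fin.succ Fin.succ).charpoly -
      C (M 0 1 * M 1 0) *
        (M.submatrix (Fin.succ ∘ Fin.succ) (Fin.succ ∘ Fin.succ)).charpoly := by
  have hsub {l : ℕ} (f : Fin l → Fin (m + 2)) (hf : f.Injective) :
      M.charmatrix.submatrix f f = (M.submatrix f f).charmatrix := by
    ext j k
    simp [Matrix.charmatrix_apply, Matrix.diagonal_apply, hf.eq_iff]
  rw [Matrix.charpoly, det_succ_succ_of_tridiagonal, hsub _ (Fin.succ_injective _),
    hsub _ ((Fin.succ_injective _).comp (Fin.succ_injective _)), Matrix.charmatrix_apply_eq,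
    Matrix.charmatrix_apply_ne _ _ _ Fin.zero_ne_one,
    Matrix.charmatrix_apply_ne _ _ _ Fin.zero_ne_one.symm, neg_mul_neg, ← C_mul]
  · rfl
  · intro k
    rw [Matrix.charmatrix_apply_ne _ _ _ (Fin.succ_ne_zero _).symm, hrow, C_0, neg_zero]
  · intro k
    rw [Matrix.charmatrix_apply_ne _ _ _ (Fin.succ_ne_zero _), hcol, C_0, neg_zero]

theorem det_add_single_zero_last {m : ℕ} (M : Matrix (Fin (m + 1)) (Fin (m + 1)) R) (c : R) :
    (M + Matrix.single 0 (Fin.last m) c).det =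
      M.det + (-1) ^ m * c * (M.submatrix Fin.succ Fin.castSucc).det := by
  have hminor (k : Fin (m + 1)) :
      (M + Matrix.single 0 (Fin.last m) c).submatrix Fin.succ k.succAbove =
        M.submatrix Fin.succ k.succAbove := by
    ext a b
    simp [(Fin.succ_ne_zero a).symm]
  simp only [Matrix.det_succ_row_zero, hminor, Matrix.add_apply, mul_add, add_mul,
    Finset.sum_add_distrib]
  congr 1
  rw [Finset.sum_eq_single (Fin.last m) (fun k _ hk => by simp [hk.symm]) (by simp)]
  simp

theorem charpoly_add_single_zero_last {m : ℕ} (M : Matrix (Fin (m + 1)) (Fin (m + 1)) R)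
    (b c : R) (hsub : ∀ k : Fin m, M k.succ k.castSucc = b)
    (hlow : ∀ j k : Fin (m + 1), (k : ℕ) + 1 < j → M j k = 0) :
    (M + Matrix.single 0 (Fin.last m) c).charpoly = M.charpoly - C (c * b ^ m) := by
  have hne (k : Fin m) : k.succ ≠ k.castSucc := by simp [Fin.ext_iff]
  have hminor : (M.charmatrix.submatrix Fin.succ Fin.castSucc).det = (-C b) ^ m := by
    rw [Matrix.det_of_isUpperTriangular]
    · simp [Matrix.charmatrix_apply_ne _ _ _ (hne _), hsub]
    · intro j k hjk
      have hlt : (k : ℕ) + 1 < j + 1 := by simpa using hjk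
      rw [Matrix.submatrix_apply, Matrix.charmatrix_apply_ne _ _ _ (by simp [Fin.ext_iff]; lia),
        hlow _ _ (by simpa using hlt), C_0, neg_zero]
  have hcorner : (M + Matrix.single 0 (Fin.last m) c).charmatrix =
      M.charmatrix + Matrix.single 0 (Fin.last m) (-C c) := by
    ext1 j k
    simp only [Matrix.charmatrix_apply, Matrix.add_apply, Matrix.single_apply, C_add]
    split_ifs
    · ring
    · simp
  have hsign : (-1) ^ m * (-C b) ^ m = C (b ^ m) := by
    rw [← mul_pow, neg_one_mul, neg_neg, C_pow]
  rw [Matrix.charpoly, hcorner, det_add_single_zero_last, hminor, ← Matrix.charpoly, C_mul]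
  linear_combination -C c * hsign

variable (R)

/-- The Laplacian of the undirected path on `m + 1` vertices with the row and column of its first
end vertex deleted. These are the diagonal blocks of the ring Laplacian once its corner entry is
cancelled. -/
def groundedPathLaplacian (m : ℕ) : Matrix (Fin m) (Fin m) R :=
  .of fun j k =>
    if j = k then (if (j : ℕ) + 1 = m then 1 else 2)
    else if (j : ℕ) + 1 = k ∨ (k : ℕ) + 1 = j then -1 else 0

theorem charpoly_groundedPathLaplacian (m : ℕ) :
    (groundedPathLaplacian R m).charpoly = shiftedW R m := by
  induction m using Nat.twoStepInduction with
  | zero => simp [shiftedW_zero]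
  | one => simp [shiftedW_one, Matrix.charpoly, groundedPathLaplacian]
  | more m ih₀ ih₁ =>
    have hsub₁ : (groundedPathLaplacian R (m + 2)).submatrix Fin.succ Fin.succ =
        groundedPathLaplacian R (m + 1) := by
      ext j k
      simp [groundedPathLaplacian]
    have hsub₂ : (groundedPathLaplacian R (m + 2)).submatrix
        (Fin.succ ∘ Fin.succ) (Fin.succ ∘ Fin.succ) = groundedPathLaplacian R m := by
      ext j k
      simp [groundedPathLaplacian]
    rw [charpoly_succ_succ_of_tridiagonal, hsub₁, hsub₂, ih₀, ih₁, shiftedW_add_two]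
    · simp [groundedPathLaplacian, map_ofNat]
    · intro k
      simp [groundedPathLaplacian, Fin.ext_iff]
    · intro k
      simp [groundedPathLaplacian, Fin.ext_iff]

/-- The matrix `L''_{n,i}`: the Laplacian of a directed ring together with a reversed path from
which one arc is missing. Rows and columns are numbered from `0`, whereas `i` is the paper's
`1`-based index. -/
def ringLaplacian (n i : ℕ) : Matrix (Fin n) (Fin n) R :=
  .of fun j k =>
    if j = k then (if (j : ℕ) = i - 1 ∨ (j : ℕ) = n - 1 then 1 else 2)
    else if ((j : ℕ) + 1 = (k : ℕ) ∧ (j : ℕ) + 1 ≠ i) ∨ (k : ℕ) + 1 = (j : ℕ) ∨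
        ((j : ℕ) = 0 ∧ (k : ℕ) = n - 1) then -1
    else 0

theorem ringLaplacian_add_single (i j : ℕ) :
    ringLaplacian R (i + 1 + (j + 1)) (i + 1) + .single 0 (Fin.last (i + 1 + j)) 1 =
      .reindex finSumFinEquiv finSumFinEquiv (.fromBlocks (groundedPathLaplacian R (i + 1)) 0
        (.single 0 (Fin.last i) (-1)) (groundedPathLaplacian R (j + 1))) := by
  ext a b
  obtain ⟨a, rfl⟩ := finSumFinEquiv.surjective a
  obtain ⟨b, rfl⟩ := finSumFinEquiv.surjective b
  rw [Matrix.add_apply, Matrix.reindex_apply, Matrix.submatrix_apply, Equiv.symm_apply_apply,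
    Equiv.symm_apply_apply]
  rcases a with a | a <;> rcases b with b | b <;>
    simp only [ringLaplacian, groundedPathLaplacian, Matrix.of_apply, Matrix.single_apply,
      Fin.ext_iff, finSumFinEquiv_apply_left, finSumFinEquiv_apply_right, Fin.val_castAdd,
      Fin.val_natAdd, Fin.val_last, Fin.val_zero, Matrix.fromBlocks_apply₁₁,
      Matrix.fromBlocks_apply₁₂, Matrix.fromBlocks_apply₂₁, Matrix.fromBlocks_apply₂₂,
      Matrix.zero_apply] <;>
    grind

theorem charpoly_ringLaplacian {i j : ℕ} (hi : 1 ≤ i) (hj : 1 ≤ j) :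
    (ringLaplacian R (i + j) i).charpoly = shiftedW R i * shiftedW R j - (-1) ^ (i + j) := by
  obtain ⟨i, rfl⟩ := Nat.exists_eq_add_of_le' hi
  obtain ⟨j, rfl⟩ := Nat.exists_eq_add_of_le' hj
  have hcorner := charpoly_add_single_zero_last (m := i + 1 + j)
    (ringLaplacian R (i + 1 + (j + 1)) (i + 1)) (-1) 1
    (fun k => by
      simp only [ringLaplacian, Matrix.of_apply, Fin.ext_iff, Fin.val_succ, Fin.val_castSucc]
      grind)
    (fun a b hab => by
      simp only [ringLaplacian, Matrix.of_apply, Fin.ext_iff]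
      grind)
  rw [ringLaplacian_add_single, Matrix.charpoly_reindex, Matrix.charpoly_fromBlocks_zero₁₂,
    charpoly_groundedPathLaplacian, charpoly_groundedPathLaplacian, one_mul, C_pow, C_neg,
    C_1] at hcorner
  linear_combination -hcorner

theorem charpoly_ringLaplacian_comm {i j : ℕ} (hi : 1 ≤ i) (hj : 1 ≤ j) :
    (ringLaplacian R (i + j) i).charpoly = (ringLaplacian R (j + i) j).charpoly := by
  rw [charpoly_ringLaplacian R hi hj, charpoly_ringLaplacian R hj hi, mul_comm, add_comm]

end RingLaplacian

theorem strictConcaveOn_log_add_const {a : ℝ} {s : Set ℝ} (hs : Convex ℝ s)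
    (ha : ∀ x ∈ s, x + a ≠ 0) : StrictConcaveOn ℝ s fun x => log (x + a) := by
  have hside : s ⊆ Set.Ioi (-a) ∨ s ⊆ Set.Iio (-a) := by
    by_contra! h
    obtain ⟨⟨x, hx, hxa⟩, ⟨y, hy, hya⟩⟩ := h.imp Set.not_subset.1 Set.not_subset.1
    exact ha (-a) (hs.ordConnected.out hx hy ⟨not_lt.1 hxa, not_lt.1 hya⟩) (neg_add_cancel a)
  rcases hside with h | h
  · exact (strictConcaveOn_log_Ioi.translate_left a).subset (by simpa using h) hs
  · exact (strictConcaveOn_log_Iio.translate_left a).subset (by simpa using h) hs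

theorem concaveOn_log_eval {p : ℝ[X]} (hp : p.Splits) {s : Set ℝ} (hs : Convex ℝ s)
    (hroot : ∀ x ∈ s, ¬ p.IsRoot x) : ConcaveOn ℝ s fun x => log (p.eval x) := by
  induction hp using Submonoid.closure_induction with
  | mem q hq =>
    rcases hq with ⟨a, rfl⟩ | ⟨a, rfl⟩
    · simpa using concaveOn_const (log a) hs
    · simpa using (strictConcaveOn_log_add_const hs (by simpa using hroot)).concaveOn
  | one => simpa using concaveOn_const (0 : ℝ) hs
  | mul q r _ _ hq hr =>
    simp only [root_mul, not_or] at hroot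
    refine ((hq fun x hx => (hroot x hx).1).add (hr fun x hx => (hroot x hx).2)).congr ?_
    intro x hx
    simp only [Pi.add_apply, eval_mul, log_mul (hroot x hx).1 (hroot x hx).2]

theorem strictConcaveOn_log_eval {p : ℝ[X]} (hp : p.Splits) (hdeg : p.degree ≠ 0) {s : Set ℝ}
    (hs : Convex ℝ s) (hroot : ∀ x ∈ s, ¬ p.IsRoot x) :
    StrictConcaveOn ℝ s fun x => log (p.eval x) := by
  obtain ⟨r, hr⟩ := hp.exists_eval_eq_zero hdeg
  obtain ⟨q, rfl⟩ := dvd_iff_isRoot.2 hr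
  simp only [root_mul, not_or, root_X_sub_C] at hroot
  have hlinear := strictConcaveOn_log_add_const (a := -r) hs fun x hx h =>
    (hroot x hx).1 (by linarith)
  refine (hlinear.add_concaveOn
    (concaveOn_log_eval (splits_X_sub_C_mul_iff.1 hp) hs fun x hx => (hroot x hx).2)).congr ?_
  intro x hx
  simp only [Pi.add_apply, eval_mul, eval_sub, eval_X, eval_C, ← sub_eq_add_neg,
    log_mul (sub_ne_zero.2 (Ne.symm (hroot x hx).1)) (hroot x hx).2]

theorem not_splits_of_abs_eval_le {p : ℝ[X]} (hdeg : p.degree ≠ 0) {a x b : ℝ} (hax : a < x)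
    (hxb : x < b) (hroot : ∀ y ∈ Set.Icc a b, ¬ p.IsRoot y)
    (ha : |p.eval x| ≤ |p.eval a|) (hb : |p.eval x| ≤ |p.eval b|) : ¬ p.Splits := by
  intro hp
  have hab := hax.trans hxb
  have hpos : 0 < |p.eval x| := abs_pos.2 (hroot x ⟨hax.le, hxb.le⟩)
  have hx : x ∈ openSegment ℝ a b := by
    rw [openSegment_eq_Ioo hab]
    exact ⟨hax, hxb⟩
  have hmin := (strictConcaveOn_log_eval hp hdeg (convex_Icc a b) hroot).lt_on_openSegment
    (Set.left_mem_Icc.2 hab.le) (Set.right_mem_Icc.2 hab.le) hab.ne hx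
  rw [← log_abs (p.eval a), ← log_abs (p.eval b), ← log_abs (p.eval x)] at hmin
  exact hmin.not_ge (le_min (log_le_log hpos ha) (log_le_log hpos hb))

theorem splits_iff_forall_aeval_eq_zero {p : ℝ[X]} (hp : p ≠ 0) :
    p.Splits ↔ ∀ z : ℂ, aeval z p = 0 → z.im = 0 := by
  have him (z : ℂ) : z ∈ (algebraMap ℝ ℂ).range ↔ z.im = 0 :=
    ⟨by rintro ⟨x, rfl⟩; exact Complex.ofReal_im x, fun h => ⟨z.re, Complex.ext rfl h.symm⟩⟩
  have hroot (z : ℂ) : (p.map (algebraMap ℝ ℂ)).IsRoot z ↔ aeval z p = 0 := by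
    rw [IsRoot.def, eval_map_algebraMap]
  simp only [← him, ← hroot]
  exact ⟨fun h z => h.mem_range_of_isRoot hp, fun h =>
    .of_splits_map (algebraMap ℝ ℂ) (IsAlgClosed.splits _) fun z hz => h z (isRoot_of_mem_roots hz)⟩

theorem cos_mul_cos_lt_cos_sq_of_le_pi_div_two {a b s : ℝ} (ha : 2 < a) (hs : 0 < s)
    (has : a * s ≤ π / 2) : cos (a * s) * cos (b * s) < cos s ^ 2 := by
  have ha0 : 0 ≤ cos (a * s) := cos_nonneg_of_mem_Icc ⟨by nlinarith, has⟩
  have ha2 : cos (a * s) < cos (2 * s) :=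
    cos_lt_cos_of_nonneg_of_le_pi (by linarith) (by linarith [pi_pos]) (by gcongr)
  calc cos (a * s) * cos (b * s) ≤ cos (a * s) := mul_le_of_le_one_right ha0 (cos_le_one _)
    _ < cos (2 * s) := ha2
    _ ≤ cos s ^ 2 := by rw [cos_two_mul]; linarith [cos_sq_le_one s]

theorem cos_mul_cos_lt_cos_sq_of_le_two_pi {a b s : ℝ} (ha : 2 < a) (hab : a + 2 < b)
    (hs : 0 < s) (hbs : b * s ≤ 2 * π) : cos (a * s) * cos (b * s) < cos s ^ 2 := by
  have hplus : 0 < sin ((b - a + 2) * s / 2) :=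
    sin_pos_of_pos_of_lt_pi (by nlinarith) (by nlinarith)
  have hminus : 0 < sin ((b - a - 2) * s / 2) :=
    sin_pos_of_pos_of_lt_pi (by nlinarith) (by nlinarith)
  -- `2 cos² s - 2 cos (as) cos (bs) = (cos 2s - cos ((b - a)s)) + (1 - cos ((a + b)s))`
  have hsin := cos_sub_cos (2 * s) ((b - a) * s)
  have hprod := two_mul_cos_mul_cos (a * s) (b * s)
  rw [show (2 * s + (b - a) * s) / 2 = (b - a + 2) * s / 2 by ring,
    show (2 * s - (b - a) * s) / 2 = -((b - a - 2) * s / 2) by ring, sin_neg] at hsin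
  rw [show a * s - b * s = -((b - a) * s) by ring, cos_neg] at hprod
  linarith [mul_pos hplus hminus, cos_le_one (a * s + b * s), cos_two_mul s]

theorem cos_mul_cos_lt_cos_sq {a b s : ℝ} (ha : 2 < a) (hab : a + 2 < b) (hs : 0 < s)
    (h : a * s ≤ π / 2 ∨ b * s ≤ 2 * π) : cos (a * s) * cos (b * s) < cos s ^ 2 :=
  h.elim (cos_mul_cos_lt_cos_sq_of_le_pi_div_two ha hs)
    (cos_mul_cos_lt_cos_sq_of_le_two_pi ha hab hs)

theorem exists_cos_mul_cos_sign_pattern {a b : ℝ} (ha : 0 < a) (hab : a < b) :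
    ∃ s t u, 0 < s ∧ s < t ∧ t < u ∧ (a * u ≤ π / 2 ∨ b * u ≤ 2 * π) ∧
      cos (a * s) * cos (b * s) ≤ 0 ∧ 0 ≤ cos (a * t) * cos (b * t) ∧
      cos (a * u) * cos (b * u) ≤ 0 := by
  have hb : 0 < b := ha.trans hab
  have hpi := pi_pos
  have hmul (c : ℝ) : b * (c / b) = c := mul_div_cancel₀ c hb.ne'
  have hza : cos (a * (π / 2 / a)) = 0 := by rw [mul_div_cancel₀ _ ha.ne', cos_pi_div_two]
  have hzb : cos (b * (π / 2 / b)) = 0 := by rw [hmul, cos_pi_div_two]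
  have hzb' : cos (b * (3 * π / 2 / b)) = 0 := by
    rw [hmul, show 3 * π / 2 = π / 2 + π by ring, cos_add_pi, cos_pi_div_two, neg_zero]
  have hs : 0 < π / 2 / b := by positivity
  have hst : π / 2 / b < π / 2 / a := by gcongr
  -- The points are zeros of `cos (a ·)` and `cos (b ·)`, except at `b = 3a`, where the second zeros
  -- collide and `2π / b` serves as the last point.
  rcases lt_trichotomy b (3 * a) with h | h | h
  · refine ⟨π / 2 / b, π / 2 / a, 3 * π / 2 / b, hs, hst, ?_, .inr ?_, ?_, ?_, ?_⟩
    · rw [div_lt_div_iff₀ ha hb]; nlinarith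
    · rw [hmul]; linarith
    · rw [hzb, mul_zero]
    · rw [hza, zero_mul]
    · rw [hzb', mul_zero]
  · have hangle : a * (2 * π / b) = π - π / 3 := by rw [h]; field_simp; ring
    refine ⟨π / 2 / b, π / 2 / a, 2 * π / b, hs, hst, ?_, .inr (hmul _).le, ?_, ?_, ?_⟩
    · rw [div_lt_div_iff₀ ha hb]; nlinarith
    · rw [hzb, mul_zero]
    · rw [hza, zero_mul]
    · rw [hmul, cos_two_pi, hangle, cos_pi_sub, cos_pi_div_three]
      norm_num
  · refine ⟨π / 2 / b, 3 * π / 2 / b, π / 2 / a, hs, ?_, ?_, .inl ?_, ?_, ?_, ?_⟩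
    · gcongr; linarith
    · rw [div_lt_div_iff₀ hb ha]; nlinarith
    · rw [mul_div_cancel₀ _ ha.ne']
    · rw [hzb, mul_zero]
    · rw [hzb', mul_zero]
    · rw [hza, zero_mul]

theorem eval_shiftedW_mul_cos (m : ℕ) (s : ℝ) :
    (shiftedW ℝ m).eval (4 * sin s ^ 2) * cos s = (-1) ^ m * cos ((2 * m + 1) * s) := by
  have hcomp := congrArg (eval (2 * cos (π / 2 - s))) (shiftedW_comp_X_sq ℝ m)
  have hS := Chebyshev.S_two_mul_real_cos (π / 2 - s) (2 * m)
  have hangle : ((2 * m : ℤ) + 1 : ℝ) * (π / 2 - s) = π / 2 - (2 * m + 1) * s + m * π := by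
    push_cast
    ring
  rw [eval_comp, eval_pow, eval_X, cos_pi_div_two_sub, mul_pow] at hcomp
  rw [hangle, sin_add_nat_mul_pi, sin_pi_div_two_sub, sin_pi_div_two_sub, cos_pi_div_two_sub,
    ← hcomp] at hS
  convert hS using 3
  norm_num

theorem abs_eval_charpoly_ringLaplacian_mul_cos_sq {i j : ℕ} (hi : 1 ≤ i) (hj : 1 ≤ j) (s : ℝ) :
    |(ringLaplacian ℝ (i + j) i).charpoly.eval (4 * sin s ^ 2)| * cos s ^ 2 =
      |cos s ^ 2 - cos ((2 * i + 1) * s) * cos ((2 * j + 1) * s)| := by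
  have heval : (ringLaplacian ℝ (i + j) i).charpoly.eval (4 * sin s ^ 2) * cos s ^ 2 =
      (-1) ^ (i + j) * (cos ((2 * i + 1) * s) * cos ((2 * j + 1) * s) - cos s ^ 2) := by
    rw [charpoly_ringLaplacian ℝ hi hj]
    simp only [eval_sub, eval_mul, eval_pow, eval_neg, eval_one]
    linear_combination
      (shiftedW ℝ j).eval (4 * sin s ^ 2) * cos s * eval_shiftedW_mul_cos i s +
        (-1) ^ i * cos ((2 * i + 1) * s) * eval_shiftedW_mul_cos j s
  rw [← abs_of_nonneg (sq_nonneg (cos s)), ← abs_mul, abs_of_nonneg (sq_nonneg (cos s)), heval,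
    abs_mul, abs_neg_one_pow, one_mul, abs_sub_comm]

theorem strictMonoOn_four_mul_sin_sq :
    StrictMonoOn (fun s => 4 * sin s ^ 2) (Set.Icc 0 (π / 2)) := fun s hs t ht hst => by
  have hs0 : 0 ≤ sin s := sin_nonneg_of_nonneg_of_le_pi hs.1 (by linarith [hs.2, pi_pos])
  have hlt : sin s < sin t :=
    sin_lt_sin_of_lt_of_le_pi_div_two (by linarith [hs.1, pi_pos]) ht.2 hst
  dsimp only
  gcongr

theorem not_splits_of_abs_eval_four_mul_sin_sq {p : ℝ[X]} (hdeg : p.degree ≠ 0) {c : ℝ → ℝ}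
    {s t u : ℝ} (hs : 0 ≤ s) (hst : s < t) (htu : t < u) (hu : u < π / 2)
    (habs : ∀ x ∈ Set.Icc s u, |p.eval (4 * sin x ^ 2)| * cos x ^ 2 = |cos x ^ 2 - c x|)
    (hc : ∀ x ∈ Set.Icc s u, c x < cos x ^ 2) (hcs : c s ≤ 0) (hct : 0 ≤ c t) (hcu : c u ≤ 0) :
    ¬ p.Splits := by
  have hcos {x : ℝ} (hx : x ∈ Set.Icc s u) : 0 < cos x ^ 2 :=
    pow_pos (cos_pos_of_mem_Ioo ⟨by linarith [hx.1, pi_pos], hx.2.trans_lt hu⟩) 2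
  have hvalue {x : ℝ} (hx : x ∈ Set.Icc s u) :
      |p.eval (4 * sin x ^ 2)| * cos x ^ 2 = cos x ^ 2 - c x := by
    rw [habs x hx, abs_of_pos (sub_pos.2 (hc x hx))]
  have hroot : ∀ y ∈ Set.Icc (4 * sin s ^ 2) (4 * sin u ^ 2), ¬ p.IsRoot y := fun y hy hr => by
    obtain ⟨x, hx, rfl⟩ := intermediate_value_Icc (hst.trans htu).le
      (f := fun x => 4 * sin x ^ 2) (by fun_prop) hy
    have hzero := hvalue hx
    rw [IsRoot.def.1 hr, abs_zero, zero_mul] at hzero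
    linarith [hc x hx]
  have hone_le {x : ℝ} (hx : x ∈ Set.Icc s u) (hcx : c x ≤ 0) : 1 ≤ |p.eval (4 * sin x ^ 2)| :=
    le_of_mul_le_mul_right (by linarith [hvalue hx]) (hcos hx)
  have ht : |p.eval (4 * sin t ^ 2)| ≤ 1 :=
    le_of_mul_le_mul_right (by linarith [hvalue ⟨hst.le, htu.le⟩]) (hcos ⟨hst.le, htu.le⟩)
  have hmono {x y : ℝ} (hx : s ≤ x) (hxy : x < y) (hy : y ≤ u) : 4 * sin x ^ 2 < 4 * sin y ^ 2 :=
    strictMonoOn_four_mul_sin_sq ⟨by linarith, by linarith⟩ ⟨by linarith, by linarith⟩ hxy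
  exact not_splits_of_abs_eval_le hdeg (hmono le_rfl hst htu.le) (hmono hst.le htu le_rfl) hroot
    (ht.trans (hone_le (Set.left_mem_Icc.2 (hst.trans htu).le) hcs))
    (ht.trans (hone_le (Set.right_mem_Icc.2 (hst.trans htu).le) hcu))

theorem not_splits_charpoly_ringLaplacian {i j : ℕ} (hi : 1 ≤ i) (hij : i + 2 ≤ j) :
    ¬ (ringLaplacian ℝ (i + j) i).charpoly.Splits := by
  have ha : (2 : ℝ) < 2 * i + 1 := by norm_cast; lia
  have hab : (2 * i + 1 : ℝ) + 2 < 2 * j + 1 := by norm_cast; lia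
  have hdeg : (ringLaplacian ℝ (i + j) i).charpoly.degree ≠ 0 := by
    rw [Matrix.charpoly_degree_eq_dim, Fintype.card_fin, Nat.cast_ne_zero]
    lia
  obtain ⟨s, t, u, hs, hst, htu, hu, hcs, hct, hcu⟩ := exists_cos_mul_cos_sign_pattern
    (two_pos.trans ha) ((lt_add_of_pos_right _ two_pos).trans hab)
  have hu2 : u < π / 2 := by rcases hu with hu | hu <;> nlinarith
  exact not_splits_of_abs_eval_four_mul_sin_sq hdeg hs.le hst htu hu2
    (fun x _ => abs_eval_charpoly_ringLaplacian_mul_cos_sq hi (by lia) x)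
    (fun x hx => cos_mul_cos_lt_cos_sq ha hab (hs.trans_le hx.1) <|
      hu.imp (le_trans (by gcongr; exact hx.2)) (le_trans (by gcongr; exact hx.2)))
    hcs hct hcu

theorem charpoly_ringLaplacian_of_two_mul_eq {n i : ℕ} (hi : 1 ≤ i) (h : 2 * i = n) :
    (ringLaplacian ℝ n i).charpoly = ∏ k ∈ Finset.Icc 1 (n / 2),
      (X - C (4 * cos (π * k / n) ^ 2)) * (X - C (4 * cos (π * k / (n + 2)) ^ 2)) := by
  subst h
  rw [Nat.mul_div_cancel_left i two_pos, Nat.cast_mul, Nat.cast_ofNat,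
    ← shiftedW_sq_sub_one_eq_prod hi, two_mul, charpoly_ringLaplacian ℝ hi hi, ← two_mul,
    pow_mul, neg_one_sq, one_pow, sq]

theorem charpoly_ringLaplacian_of_two_mul_eq_pred_or_succ {n i : ℕ} (hi : 1 ≤ i) (hin : i < n)
    (h : 2 * i = n - 1 ∨ 2 * i = n + 1) :
    (ringLaplacian ℝ n i).charpoly =
      ∏ k ∈ Finset.Icc 1 n, (X - C (4 * cos (π * k / (n + 1)) ^ 2)) := by
  have hprod (m : ℕ) (hm : 1 ≤ m) : (ringLaplacian ℝ (m + (m + 1)) m).charpoly =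
      ∏ k ∈ Finset.Icc 1 (m + (m + 1)),
        (X - C (4 * cos (π * k / ((m + (m + 1) : ℕ) + 1)) ^ 2)) := by
    have hcast : ((m + (m + 1) : ℕ) : ℝ) + 1 = 2 * (m + 1) := by push_cast; ring
    rw [charpoly_ringLaplacian ℝ hm (by lia), Odd.neg_one_pow ⟨m, by ring⟩, sub_neg_eq_add,
      shiftedW_mul_succ_add_one_eq_prod, hcast, ← add_assoc, ← two_mul]
  rcases h with h | h
  · obtain rfl : n = i + (i + 1) := by lia
    exact hprod i hi
  · obtain ⟨m, rfl⟩ := Nat.exists_eq_add_of_le' hi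
    obtain rfl : n = m + 1 + m := by lia
    rw [charpoly_ringLaplacian_comm ℝ hi (by lia), hprod m (by lia), add_comm m]

theorem splits_charpoly_ringLaplacian_iff {n i : ℕ} (hi : 1 ≤ i) (hin : i < n) :
    (ringLaplacian ℝ n i).charpoly.Splits ↔ 2 * i = n - 1 ∨ 2 * i = n ∨ 2 * i = n + 1 := by
  constructor
  · obtain ⟨j, rfl⟩ := Nat.exists_eq_add_of_lt hin
    contrapose!
    intro h
    rw [add_assoc]
    rcases le_or_gt (i + 2) (j + 1) with hij | hij
    · exact not_splits_charpoly_ringLaplacian hi hij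
    · rw [charpoly_ringLaplacian_comm ℝ hi (by lia)]
      exact not_splits_charpoly_ringLaplacian (by lia) (by lia)
  · intro h
    by_cases hn : 2 * i = n
    · rw [charpoly_ringLaplacian_of_two_mul_eq hi hn]
      exact .prod fun k _ => (Splits.X_sub_C _).mul (Splits.X_sub_C _)
    · rw [charpoly_ringLaplacian_of_two_mul_eq_pred_or_succ hi hin (by lia)]
      exact .prod fun k _ => Splits.X_sub_C _

theorem L''_essentially_cyclic_iff (n i : ℕ) (hn : 2 ≤ n) (hi : 1 ≤ i) (hin : i < n)
    (L : Matrix (Fin n) (Fin n) ℝ)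
    (hL : ∀ j k : Fin n, L j k =
      if j = k then (if (j : ℕ) = i - 1 ∨ (j : ℕ) = n - 1 then 1 else 2)
      else if ((j : ℕ) + 1 = (k : ℕ) ∧ (j : ℕ) + 1 ≠ i) ∨ (k : ℕ) + 1 = (j : ℕ) ∨
          ((j : ℕ) = 0 ∧ (k : ℕ) = n - 1) then -1
      else 0) :
    ((∃ z : ℂ, z.im ≠ 0 ∧ (Polynomial.aeval z) L.charpoly = 0) ↔
      ¬(2 * i = n - 1 ∨ 2 * i = n ∨ 2 * i = n + 1)) ∧
    (2 * i = n →
      L.charpoly = ∏ k ∈ Finset.Icc 1 (n / 2),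
        (X - Polynomial.C (4 * Real.cos (π * k / n) ^ 2)) *
          (X - Polynomial.C (4 * Real.cos (π * k / (n + 2)) ^ 2))) ∧
    (2 * i = n - 1 ∨ 2 * i = n + 1 →
      L.charpoly = ∏ k ∈ Finset.Icc 1 n,
        (X - Polynomial.C (4 * Real.cos (π * k / (n + 1)) ^ 2))) := by
  obtain rfl : L = ringLaplacian ℝ n i := Matrix.ext hL
  refine ⟨?_, charpoly_ringLaplacian_of_two_mul_eq hi,
    charpoly_ringLaplacian_of_two_mul_eq_pred_or_succ hi hin⟩
  rw [← splits_charpoly_ringLaplacian_iff hi hin,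
    splits_iff_forall_aeval_eq_zero (Matrix.charpoly_monic _).ne_zero]
  push Not
  simp only [and_comm]
end

section
/- Let i, j ≥ 1 be integers with i + j even. Then every complex root of the polynomial Z_i·Z_j − 1 is real if and only if i = j. Moreover, when i = j, the polynomial Z_j² − 1 factors completely over ℝ as Π_{k=1}^{j} (X − 4·cos²(πk/(2j)))·(X − 4·cos²(πk/(2j+2))). -/
open Polynomial Real

/-- The polynomial sequence `Z`: `Z 0 = 1`, `Z 1 = X - 1`,
`Z n = (X - 2) * Z (n-1) - Z (n-2)` for `n ≥ 2`. -/
noncomputable def Z : ℕ → Polynomial ℝ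
  | 0 => 1
  | 1 => X - 1
  | n + 2 => (X - 2) * Z (n + 1) - Z n

/-!
Let `S n` be the Chebyshev polynomial with `S n (2 cos θ) sin θ = sin ((n + 1) θ)`. Then
`Z n = (S n + S (n - 1)) ∘ (X - 2)`, and `S n ^ 2 + S (n - 1) ^ 2 - X S n S (n - 1) = 1` turns
`Z n ^ 2 - 1` into `X (S n ∘ (X - 2)) (S (n - 1) ∘ (X - 2))`, whose roots are known.

Now let `i < j` with `i + j` even, `s = i + j + 1`, `d = j - i` and `P = Z i * Z j - 1`. Since
`Z n (4 sin² t) cos t = (-1) ^ n cos ((2 n + 1) t)`,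
`P (4 sin² t) cos² t = sin² t - sin² (s t) - sin² (d t)`,
which is negative for `0 < s t ≤ 3π/2`: if `d t < π - t` then `sin² t < sin² (d t)`, and otherwise
`t < s t - π ≤ π/2` gives `sin² t < sin² (s t)`. Moreover `P ≤ -1` where `s t` is `π/2` or `3π/2`,
and `-1 ≤ P` where `s t = π`. But for a nonconstant real-rooted `P` the function `log |P|` is
strictly concave on every interval free of roots, so `|P|` exceeds at interior points its smaller
value at the ends. Hence `P` has a non-real root.
-/

section RealRooted

lemma strictAntiOn_one_div_sub {K : Type*} [Field K] [LinearOrder K] [IsStrictOrderedRing K]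
    {s : Set K} [s.OrdConnected] {a : K} (ha : a ∉ s) :
    StrictAntiOn (fun x ↦ 1 / (x - a)) s := by
  intro x hx y hy hxy
  rcases lt_or_ge a x with hax | hxa
  · exact one_div_lt_one_div_of_lt (sub_pos.2 hax) (by simpa using hxy)
  · have hya : y < a := lt_of_not_ge fun hay ↦ ha (Set.Icc_subset s hx hy ⟨hxa, hay⟩)
    exact one_div_lt_one_div_of_neg_of_lt (sub_neg.2 hya) (by simpa using hxy)

theorem strictConcaveOn_log_eval_of_splits {P : ℝ[X]} (hP : P.Splits) (hroots : P.roots ≠ 0)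
    {s : Set ℝ} (hs : Convex ℝ s) (h0 : ∀ x ∈ s, P.eval x ≠ 0) :
    StrictConcaveOn ℝ s fun x ↦ log (P.eval x) := by
  refine StrictAntiOn.strictConcaveOn_of_deriv hs (P.continuousOn.log h0) ?_
  have : s.OrdConnected := hs.ordConnected
  have hderiv : ∀ x ∈ s, deriv (fun x ↦ log (P.eval x)) x =
      (P.roots.map fun a ↦ 1 / (x - a)).sum := fun x hx ↦ by
    rw [((P.hasDerivAt x).log (h0 x hx)).deriv, hP.eval_derivative_div_eval_of_ne_zero (h0 x hx)]
  refine StrictAntiOn.mono (fun x hx y hy hxy ↦ ?_) interior_subset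
  rw [hderiv x hx, hderiv y hy]
  exact Multiset.sum_lt_sum_of_nonempty hroots fun a ha ↦
    strictAntiOn_one_div_sub (fun has ↦ h0 a has (isRoot_of_mem_roots ha)) hx hy hxy

theorem eval_lt_max_of_splits_of_neg {P : ℝ[X]} (hP : P.Splits) (hroots : P.roots ≠ 0)
    {u v w : ℝ} (huv : u < v) (hvw : v < w) (hneg : ∀ x ∈ Set.Icc u w, P.eval x < 0) :
    P.eval v < max (P.eval u) (P.eval w) := by
  have huw : u < w := huv.trans hvw
  have hu : u ∈ Set.Icc u w := Set.left_mem_Icc.2 huw.le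
  have hw : w ∈ Set.Icc u w := Set.right_mem_Icc.2 huw.le
  have hv : v ∈ Set.Icc u w := ⟨huv.le, hvw.le⟩
  have hlog : min (log (P.eval u)) (log (P.eval w)) < log (P.eval v) :=
    (strictConcaveOn_log_eval_of_splits hP hroots (convex_Icc u w) fun x hx ↦ (hneg x hx).ne)
      |>.lt_on_openSegment hu hw huw.ne (openSegment_eq_Ioo huw ▸ ⟨huv, hvw⟩)
  simpa only [min_lt_iff, lt_max_iff,
    strictAntiOn_log.lt_iff_gt (hneg u hu) (hneg v hv),
    strictAntiOn_log.lt_iff_gt (hneg w hw) (hneg v hv)] using hlog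

theorem splits_of_forall_im_eq_zero {P : ℝ[X]} (h : ∀ z : ℂ, aeval z P = 0 → z.im = 0) :
    P.Splits := by
  refine .of_splits_map (algebraMap ℝ ℂ) (IsAlgClosed.splits _) fun z hz ↦ ?_
  have hz0 : z.im = 0 := h z (by simpa [eval_map_algebraMap] using isRoot_of_mem_roots hz)
  exact ⟨z.re, Complex.ext rfl hz0.symm⟩

theorem im_eq_zero_of_splits {P : ℝ[X]} (hP : P.Splits) (hP0 : P ≠ 0) {z : ℂ}
    (hz : aeval z P = 0) : z.im = 0 := by
  obtain ⟨x, rfl⟩ := hP.mem_range_of_isRoot (i := algebraMap ℝ ℂ) hP0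
    (by rwa [IsRoot.def, eval_map_algebraMap])
  exact Complex.ofReal_im x

end RealRooted

section ChebyshevFactorization

lemma chebyshev_U_eq_prod (n : ℕ) :
    Chebyshev.U ℝ n =
      C (2 ^ n) * ∏ k ∈ Finset.range n, (X - C (cos ((k + 1) * π / (n + 1)))) := by
  have hroots : (Chebyshev.U ℝ n).roots =
      (Finset.range n).val.map fun k : ℕ ↦ cos ((k + 1) * π / (n + 1)) := by
    rw [Chebyshev.roots_U_real, Finset.image_val]
    exact (Chebyshev.roots_U_real_nodup n).dedup
  have hcard : (Chebyshev.U ℝ n).roots.card = (Chebyshev.U ℝ n).natDegree := by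
    simp [hroots]
  rw [← C_leadingCoeff_mul_prod_multiset_X_sub_C hcard, Chebyshev.leadingCoeff_U_natCast, hroots,
    Multiset.map_map]
  rfl

lemma chebyshev_S_eq_prod (n : ℕ) :
    Chebyshev.S ℝ n = ∏ k ∈ Finset.range n, (X - C (2 * cos ((k + 1) * π / (n + 1)))) := by
  have hlinear (a : ℝ) : (C 2 * (X - C a)).comp (C (⅟2) * X) = X - C (2 * a) := by
    have hinv : (C 2 : ℝ[X]) * C (⅟2) = 1 := by rw [← C_mul, mul_invOf_self, C_1]
    simp only [mul_comp, sub_comp, C_comp, X_comp, C_mul]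
    linear_combination X * hinv
  have hconst : (C (2 ^ n) : ℝ[X]) = ∏ _k ∈ Finset.range n, C 2 := by simp
  rw [Chebyshev.S_eq_U_comp_half_mul_X, chebyshev_U_eq_prod, hconst, ← Finset.prod_mul_distrib,
    prod_comp]
  exact Finset.prod_congr rfl fun k _ ↦ hlinear _

lemma chebyshev_S_comp_X_sub_two_eq_prod (n : ℕ) :
    (Chebyshev.S ℝ n).comp (X - 2) =
      ∏ k ∈ Finset.Icc 1 n, (X - C (4 * cos (π * k / (2 * n + 2)) ^ 2)) := by
  have hhalf (k : ℕ) : 2 + 2 * cos ((k + 1) * π / (n + 1)) =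
      4 * cos (π * (k + 1 : ℕ) / (2 * n + 2)) ^ 2 := by
    have hdouble : (k + 1) * π / (n + 1) = 2 * (π * (k + 1 : ℕ) / (2 * n + 2)) := by
      push_cast
      field_simp
    rw [hdouble, cos_two_mul]
    ring
  rw [chebyshev_S_eq_prod, prod_comp, ← Finset.Ico_add_one_right_eq_Icc,
    Finset.prod_Ico_eq_prod_range, Nat.add_sub_cancel]
  refine Finset.prod_congr rfl fun k _ ↦ ?_
  rw [add_comm 1 k, ← hhalf, sub_comp, X_comp, C_comp, C_add, map_ofNat]
  ring

lemma Z_eq_chebyshev_S_comp (n : ℕ) :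
    Z n = (Chebyshev.S ℝ n + Chebyshev.S ℝ (n - 1)).comp (X - 2) := by
  induction n using Nat.twoStepInduction with
  | zero => simp [Z]
  | one =>
    simp only [Z, Nat.cast_one, sub_self, Chebyshev.S_one, Chebyshev.S_zero, add_comp, X_comp,
      one_comp]
    ring
  | more n ih ih' =>
    have h := Chebyshev.S_add_two ℝ n
    have h' := Chebyshev.S_add_one ℝ n
    rw [Z, ih, ih']
    push_cast
    simp only [add_sub_cancel_right, show (n : ℤ) + 2 - 1 = n + 1 by ring, h, h', add_comp,
      sub_comp, mul_comp, X_comp]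
    ring

lemma Z_mul_self_sub_one (n : ℕ) :
    Z n * Z n - 1 =
      X * (Chebyshev.S ℝ (n - 1)).comp (X - 2) * (Chebyshev.S ℝ n).comp (X - 2) := by
  have h := congr_arg (comp · (X - 2)) (Chebyshev.S_sq_add_S_sq ℝ (n - 1))
  simp only [sub_add_cancel, add_comp, sub_comp, mul_comp, pow_comp, X_comp, one_comp] at h
  rw [Z_eq_chebyshev_S_comp, add_comp]
  linear_combination h

theorem Z_mul_self_sub_one_eq_prod {n : ℕ} (hn : 1 ≤ n) :
    Z n * Z n - 1 = ∏ k ∈ Finset.Icc 1 n,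
      (X - C (4 * cos (π * k / (2 * n)) ^ 2)) * (X - C (4 * cos (π * k / (2 * n + 2)) ^ 2)) := by
  obtain ⟨m, rfl⟩ := Nat.exists_eq_add_of_le' hn
  have hX : (X : ℝ[X]) = X - C (4 * cos (π * (m + 1 : ℕ) / (2 * (m + 1 : ℕ))) ^ 2) := by
    rw [mul_div_mul_right _ _ (Nat.cast_ne_zero.2 m.succ_ne_zero), cos_pi_div_two]
    simp
  have hS : X * (Chebyshev.S ℝ m).comp (X - 2) =
      ∏ k ∈ Finset.Icc 1 (m + 1), (X - C (4 * cos (π * k / (2 * (m + 1 : ℕ))) ^ 2)) := by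
    rw [Finset.prod_Icc_succ_top (by simp), ← hX, chebyshev_S_comp_X_sub_two_eq_prod, mul_comm]
    push_cast
    simp only [mul_add, mul_one]
  rw [Z_mul_self_sub_one, Finset.prod_mul_distrib, ← hS, ← chebyshev_S_comp_X_sub_two_eq_prod]
  simp

end ChebyshevFactorization

section TrigonometricForm

lemma sin_lt_sin_of_lt_pi_sub {x y : ℝ} (hx : 0 ≤ x) (hxy : x < y) (hy : y < π - x) :
    sin x < sin y := by
  have hsin : 0 < sin ((y - x) / 2) := sin_pos_of_pos_of_lt_pi (by linarith) (by linarith)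
  have hcos : 0 < cos ((y + x) / 2) := cos_pos_of_mem_Ioo ⟨by linarith, by linarith⟩
  rw [← sub_pos, sin_sub_sin]
  positivity

lemma sin_sq_lt_sin_sq {x y : ℝ} (hx : 0 ≤ x) (hxy : x < y) (hy : y < π - x) :
    sin x ^ 2 < sin y ^ 2 :=
  pow_lt_pow_left₀ (sin_lt_sin_of_lt_pi_sub hx hxy hy)
    (sin_nonneg_of_nonneg_of_le_pi hx (by linarith)) two_ne_zero

lemma sin_sq_lt_add {s d t : ℝ} (hd : 1 < d) (hds : d + 2 < s) (ht : 0 < t)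
    (hst : s * t ≤ 3 * π / 2) : sin t ^ 2 < sin (s * t) ^ 2 + sin (d * t) ^ 2 := by
  rcases lt_or_ge (d * t) (π - t) with hdt | hdt
  · have := sin_sq_lt_sin_sq ht.le (lt_mul_left ht hd) hdt
    linarith [sq_nonneg (sin (s * t))]
  · have hshift : sin (s * t - π) ^ 2 = sin (s * t) ^ 2 := by rw [sin_sub_pi, neg_sq]
    have hst' : t < s * t - π := by nlinarith
    have := sin_sq_lt_sin_sq ht.le hst' (by nlinarith)
    linarith [sq_nonneg (sin (d * t))]

lemma Z_eval_four_mul_sin_sq_mul_cos (n : ℕ) (t : ℝ) :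
    (Z n).eval (4 * sin t ^ 2) * cos t = (-1) ^ n * cos ((2 * n + 1) * t) := by
  induction n using Nat.twoStepInduction with
  | zero => simp [Z]
  | one =>
    have h3 : (2 * ((1 : ℕ) : ℝ) + 1) * t = 3 * t := by norm_num
    rw [h3, cos_three_mul]
    simp only [Z, eval_sub, eval_X, eval_one, sin_sq]
    ring
  | more n ih ih' =>
    have hcos : cos ((2 * (n + 2 : ℕ) + 1) * t) + cos ((2 * n + 1) * t) =
        2 * cos ((2 * (n + 1 : ℕ) + 1) * t) * cos (2 * t) := by
      rw [cos_add_cos]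
      push_cast
      ring_nf
    rw [cos_two_mul, cos_sq'] at hcos
    simp only [Z, eval_sub, eval_mul, eval_X, eval_ofNat]
    linear_combination (4 * sin t ^ 2 - 2) * ih' - ih - (-1) ^ n * hcos

lemma Z_mul_Z_eval_four_mul_sin_sq_mul_cos_sq {i j : ℕ} (hpar : Even (i + j)) (t : ℝ) :
    (Z i * Z j).eval (4 * sin t ^ 2) * cos t ^ 2 =
      cos ((i + j + 1) * t) ^ 2 - sin ((j - i) * t) ^ 2 := by
  have hi := Z_eval_four_mul_sin_sq_mul_cos i t
  have hj := Z_eval_four_mul_sin_sq_mul_cos j t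
  have hsign : (-1 : ℝ) ^ i * (-1) ^ j = 1 := by rw [← pow_add, hpar.neg_one_pow]
  set a := (i + j + 1) * t
  set b := (j - i) * t
  rw [show (2 * i + 1) * t = a - b by ring, cos_sub] at hi
  rw [show (2 * j + 1) * t = a + b by ring, cos_add] at hj
  calc (Z i * Z j).eval (4 * sin t ^ 2) * cos t ^ 2
      = ((-1) ^ i * (-1) ^ j) *
          ((cos a * cos b + sin a * sin b) * (cos a * cos b - sin a * sin b)) := by
        rw [eval_mul]
        linear_combination (eval (4 * sin t ^ 2) (Z j) * cos t) * hi +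
          ((-1) ^ i * (cos a * cos b + sin a * sin b)) * hj
    _ = cos a ^ 2 - sin b ^ 2 := by
        rw [hsign]
        linear_combination cos a ^ 2 * sin_sq_add_cos_sq b - sin b ^ 2 * sin_sq_add_cos_sq a

end TrigonometricForm

section NonRealRoots

variable {i j : ℕ}

lemma Z_mul_Z_sub_one_eval_zero (hpar : Even (i + j)) : (Z i * Z j - 1).eval 0 = 0 := by
  simpa [sub_eq_zero] using Z_mul_Z_eval_four_mul_sin_sq_mul_cos_sq hpar 0

lemma Z_mul_Z_eval_nonpos (hpar : Even (i + j)) {t : ℝ} (ht : cos t ≠ 0)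
    (hst : cos ((i + j + 1) * t) = 0) : (Z i * Z j).eval (4 * sin t ^ 2) ≤ 0 := by
  refine nonpos_of_mul_nonpos_left ?_ (by positivity : 0 < cos t ^ 2)
  rw [Z_mul_Z_eval_four_mul_sin_sq_mul_cos_sq hpar, hst]
  linarith [sq_nonneg (sin ((j - i) * t))]

lemma Z_mul_Z_eval_nonneg (hpar : Even (i + j)) {t : ℝ} (ht : cos t ≠ 0)
    (hst : sin ((i + j + 1) * t) = 0) : 0 ≤ (Z i * Z j).eval (4 * sin t ^ 2) := by
  refine nonneg_of_mul_nonneg_left ?_ (by positivity : 0 < cos t ^ 2)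
  rw [Z_mul_Z_eval_four_mul_sin_sq_mul_cos_sq hpar, cos_sq', hst]
  linarith [sin_sq_le_one ((j - i) * t)]

lemma Z_mul_Z_sub_one_eval_neg (hi : 1 ≤ i) (hij : i < j) (hpar : Even (i + j)) {t : ℝ}
    (ht : 0 < t) (hst : (i + j + 1) * t ≤ 3 * π / 2) :
    (Z i * Z j - 1).eval (4 * sin t ^ 2) < 0 := by
  have hi' : (1 : ℝ) ≤ i := by exact_mod_cast hi
  have hij' : (i : ℝ) + 2 ≤ j := by
    obtain ⟨r, hr⟩ := hpar
    exact_mod_cast (by omega : i + 2 ≤ j)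
  have hsin := sin_sq_lt_add (by linarith : (1 : ℝ) < j - i) (by linarith : (j : ℝ) - i + 2 < _)
    ht hst
  refine neg_of_mul_neg_left ?_ (sq_nonneg (cos t))
  rw [eval_sub, eval_one, sub_mul, Z_mul_Z_eval_four_mul_sin_sq_mul_cos_sq hpar, cos_sq', cos_sq' t]
  linarith

lemma exists_Z_mul_Z_sub_one_neg_with_interior_max (hi : 1 ≤ i) (hij : i < j)
    (hpar : Even (i + j)) :
    ∃ u v w, u < v ∧ v < w ∧ (∀ x ∈ Set.Icc u w, (Z i * Z j - 1).eval x < 0) ∧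
      max ((Z i * Z j - 1).eval u) ((Z i * Z j - 1).eval w) ≤ (Z i * Z j - 1).eval v := by
  set s : ℝ := i + j + 1
  set x : ℝ → ℝ := fun t ↦ 4 * sin t ^ 2
  have hs : 3 < s := by
    have : (3 : ℝ) ≤ i + j := by exact_mod_cast (by omega : 3 ≤ i + j)
    linarith
  have hs0 : s ≠ 0 := by linarith
  obtain ⟨a, ha⟩ : ∃ a, s * a = π / 2 := ⟨_, mul_div_cancel₀ _ hs0⟩
  obtain ⟨b, hb⟩ : ∃ b, s * b = π := ⟨_, mul_div_cancel₀ _ hs0⟩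
  obtain ⟨c, hc⟩ : ∃ c, s * c = π / 2 + π := ⟨_, mul_div_cancel₀ _ hs0⟩
  have hpi := pi_pos
  have ha0 : 0 < a := by nlinarith
  have hab : a < b := by nlinarith
  have hbc : b < c := by nlinarith
  have hcpi : c < π / 2 := by nlinarith
  have hcos {t : ℝ} (hat : a ≤ t) (htc : t ≤ c) : cos t ≠ 0 :=
    (cos_pos_of_mem_Ioo ⟨by linarith, by linarith⟩).ne'
  have hx {t t' : ℝ} (hat : a ≤ t) (htt' : t < t') (htc : t' ≤ c) : x t < x t' :=
    mul_lt_mul_of_pos_left (sin_sq_lt_sin_sq (by linarith) htt' (by linarith)) four_pos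
  have hQa : (Z i * Z j).eval (x a) ≤ 0 :=
    Z_mul_Z_eval_nonpos hpar (hcos le_rfl (by linarith)) (by rw [ha, cos_pi_div_two])
  have hQb : 0 ≤ (Z i * Z j).eval (x b) :=
    Z_mul_Z_eval_nonneg hpar (hcos hab.le hbc.le) (by rw [hb, sin_pi])
  have hQc : (Z i * Z j).eval (x c) ≤ 0 :=
    Z_mul_Z_eval_nonpos hpar (hcos (by linarith) le_rfl)
      (by rw [hc, cos_add_pi, cos_pi_div_two, neg_zero])
  refine ⟨x a, x b, x c, hx le_rfl hab hbc.le, hx hab.le hbc le_rfl, fun y hy ↦ ?_, ?_⟩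
  · obtain ⟨t, ht, rfl⟩ := intermediate_value_Icc (by linarith)
      (by fun_prop : ContinuousOn x (Set.Icc a c)) hy
    exact Z_mul_Z_sub_one_eval_neg hi hij hpar (by linarith [ht.1]) (by nlinarith [ht.2])
  · simp only [eval_sub, eval_one]
    exact max_le (by linarith) (by linarith)

theorem not_splits_Z_mul_Z_sub_one (hi : 1 ≤ i) (hij : i < j) (hpar : Even (i + j)) :
    ¬ (Z i * Z j - 1).Splits := by
  intro hsplits
  obtain ⟨u, v, w, huv, hvw, hneg, hmax⟩ :=
    exists_Z_mul_Z_sub_one_neg_with_interior_max hi hij hpar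
  have hne : Z i * Z j - 1 ≠ 0 := fun h ↦ by
    simpa [h] using hneg v ⟨huv.le, hvw.le⟩
  have hroots : (Z i * Z j - 1).roots ≠ 0 := fun h ↦ by
    simpa [h] using (mem_roots hne).2 (Z_mul_Z_sub_one_eval_zero hpar)
  exact (eval_lt_max_of_splits_of_neg hsplits hroots huv hvw hneg).not_ge hmax

end NonRealRoots

theorem ZZ_sub_one_real_roots_iff (i j : ℕ) (hi : 1 ≤ i) (hj : 1 ≤ j)
    (hpar : Even (i + j)) :
    ((∀ z : ℂ, (Polynomial.aeval z) (Z i * Z j - 1) = 0 → z.im = 0) ↔ i = j) ∧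
    (i = j →
      Z i * Z j - 1 = ∏ k ∈ Finset.Icc 1 j,
        (X - Polynomial.C (4 * Real.cos (π * k / (2 * j)) ^ 2)) *
          (X - Polynomial.C (4 * Real.cos (π * k / (2 * j + 2)) ^ 2))) := by
  refine ⟨⟨fun hreal ↦ ?_, ?_⟩, ?_⟩
  · have hsplits : (Z i * Z j - 1).Splits := splits_of_forall_im_eq_zero hreal
    rcases lt_trichotomy i j with hij | hij | hji
    · exact absurd hsplits (not_splits_Z_mul_Z_sub_one hi hij hpar)
    · exact hij
    · exact absurd (mul_comm (Z i) (Z j) ▸ hsplits)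
        (not_splits_Z_mul_Z_sub_one hj hji (add_comm i j ▸ hpar))
  · rintro rfl
    rw [Z_mul_self_sub_one_eq_prod hi]
    exact fun z ↦ im_eq_zero_of_splits
      (.prod fun _ _ ↦ (Splits.X_sub_C _).mul (Splits.X_sub_C _))
      (Finset.prod_ne_zero_iff.2 fun _ _ ↦ mul_ne_zero (X_sub_C_ne_zero _) (X_sub_C_ne_zero _))
  · rintro rfl
    exact Z_mul_self_sub_one_eq_prod hi
end
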